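/- Let Y be a compact set in ℂ^N, let x₀ be a point of Y, let ε > 0, and let {p_j}_{j∈ℕ} be a countable collection of polynomials in z₁,…,z_N on ℂ^N such that p_j(x₀) ≠ 0 for all j. Then there exists a totally disconnected, compact, polynomially convex set E with x₀ ∈ E ⊆ Y ⊆ ℂ^N such that (i) each p_j is zero-free on E, and (ii) m(Y \ E) < ε. -/

import Mathlib

open Set MvPolynomial Topology MeasureTheory

noncomputable section

/-- The polynomial hull of a set `X ⊆ ℂ^N`: points where every polynomial in the
coordinates is dominated by its supremum over `X`. -/
def polyHull {N : ℕ} (X : Set (Fin N → ℂ)) : Set (Fin N → ℂ) :=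
  {z | ∀ p : MvPolynomial (Fin N) ℂ, ‖eval z p‖ ≤ ⨆ x ∈ X, ‖eval x p‖}

/-- A set is polynomially convex if it equals its polynomial hull. -/
def IsPolynomiallyConvex {N : ℕ} (X : Set (Fin N → ℂ)) : Prop :=
  polyHull X = X

/-- `J` is an arc from `a` to `b`: the image of an injective continuous map on `[0,1]`
(equivalently, in a Hausdorff space, a subset homeomorphic to `[0,1]`). -/
def IsArcFrom {α : Type*} [TopologicalSpace α] (J : Set α) (a b : α) : Prop :=
  ∃ γ : ℝ → α, ContinuousOn γ (Icc 0 1) ∧ InjOn γ (Icc 0 1) ∧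
    γ '' Icc 0 1 = J ∧ γ 0 = a ∧ γ 1 = b

/-- `J` is an arc: a subset homeomorphic to the closed unit interval. -/
def IsArc {α : Type*} [TopologicalSpace α] (J : Set α) : Prop :=
  ∃ a b, IsArcFrom J a b

/-- `J` is a simple closed curve: a subset homeomorphic to the unit circle. -/
def IsSimpleClosedCurve {α : Type*} [TopologicalSpace α] (J : Set α) : Prop :=
  ∃ γ : Circle → α, Continuous γ ∧ Function.Injective γ ∧ Set.range γ = J

/-- A `C^∞`-smooth open arc: the image of an injective `C^∞` map on an open interval,
with nowhere vanishing derivative, that is a homeomorphism onto its image. -/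
def IsSmoothOpenArc {E : Type*} [NormedAddCommGroup E] [NormedSpace ℝ E]
    (A : Set E) : Prop :=
  ∃ (a b : ℝ) (γ : ℝ → E), a < b ∧ ContDiffOn ℝ (⊤ : ℕ∞) γ (Ioo a b) ∧
    (∀ t ∈ Ioo a b, derivWithin γ (Ioo a b) t ≠ 0) ∧
    InjOn γ (Ioo a b) ∧
    IsEmbedding ((Ioo a b).restrict γ) ∧
    γ '' Ioo a b = A

/-- `P(X) = C(X)`: every continuous function on `X` is a uniform limit of polynomials. -/
def PolyEqContinuous {N : ℕ} (X : Set (Fin N → ℂ)) : Prop :=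
  ∀ f : (Fin N → ℂ) → ℂ, ContinuousOn f X → ∀ δ : ℝ, 0 < δ →
    ∃ p : MvPolynomial (Fin N) ℂ, ∀ x ∈ X, ‖f x - eval x p‖ < δ

/-- `L` is a complex affine line in `ℂ^N`. -/
def IsComplexAffineLine {N : ℕ} (L : Set (Fin N → ℂ)) : Prop :=
  ∃ (z₀ v : Fin N → ℂ), v ≠ 0 ∧ L = {z | ∃ t : ℂ, z = z₀ + t • v}


lemma null_of_lines {N : ℕ} (x₀ : Fin N → ℂ) (Z : Set (Fin N → ℂ)) (hZ : IsClosed Z)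
    (h : ∀ v : Fin N → ℂ, {t : ℝ | x₀ + t • v ∈ Z}.Countable) : volume Z = 0 := by
  have h1 : ∀ᵐ v : Fin N → ℂ, ∀ᵐ t : ℝ, x₀ + t • v ∉ Z := by
    refine Filter.Eventually.of_forall fun v => ?_
    have := (h v).measure_zero volume
    rw [ae_iff]
    simpa using this
  have hm : MeasurableSet {x : (Fin N → ℂ) × ℝ | x₀ + x.2 • x.1 ∉ Z} := by
    have : IsClosed ((fun x : (Fin N → ℂ) × ℝ => x₀ + x.2 • x.1) ⁻¹' Z) :=
      hZ.preimage (by fun_prop)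
    exact this.measurableSet.compl
  rw [Measure.ae_ae_comm hm] at h1
  have h2 : ∀ᵐ t : ℝ, t ≠ 0 := by
    rw [ae_iff]; simp
  obtain ⟨t, ht, ht0⟩ := (h1.and h2).exists
  rw [ae_iff] at ht
  have e : {a : Fin N → ℂ | ¬ x₀ + t • a ∉ Z} = (t • ·) ⁻¹' ((x₀ + ·) ⁻¹' Z) := by
    ext; simp
  rw [e, Measure.addHaar_preimage_smul _ ht0, measure_preimage_add] at ht
  simpa [ht0] using ht

lemma select_one {N : ℕ} (Y : Set (Fin N → ℂ)) (hY : IsCompact Y) (x₀ : Fin N → ℂ)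
    (g : (Fin N → ℂ) → ℝ) (hg : Continuous g) (h0 : g x₀ ≠ 0) (hZ : volume {x | g x = 0} = 0)
    (η : ENNReal) (hη : 0 < η) :
    ∃ δ : ℝ, 0 < δ ∧ δ ≤ |g x₀| ∧ volume (Y \ {x | δ ≤ |g x|}) < η := by
  let s : ℕ → Set (Fin N → ℂ) := fun n => Y ∩ {x | |g x| ≤ 1 / ((n : ℝ) + 1)}
  have hlim := tendsto_measure_iInter_atTop (μ := volume) (s := s)
    (fun n => (hY.isClosed.inter (isClosed_le (by fun_prop) continuous_const)).measurableSet.nullMeasurableSet)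
    (fun m n hmn x hx => ⟨hx.1, le_trans (show |g x| ≤ _ from hx.2) (Nat.one_div_le_one_div hmn)⟩)
    ⟨0, ((measure_mono inter_subset_left).trans_lt hY.measure_lt_top).ne⟩
  have hz : volume (⋂ n, s n) = 0 := by
    refine measure_mono_null (fun x hx => ?_) hZ
    rw [mem_iInter] at hx
    have h1 : ∀ n : ℕ, |g x| ≤ 1 / ((n : ℝ) + 1) := fun n => (hx n).2
    have : |g x| ≤ 0 := ge_of_tendsto' tendsto_one_div_add_atTop_nhds_zero_nat h1
    simpa using this
  rw [hz] at hlim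
  obtain ⟨n, hn⟩ := (hlim.eventually_lt_const hη).exists
  refine ⟨min (1 / ((n : ℝ) + 1)) |g x₀|, lt_min (by positivity) (abs_pos.2 h0), min_le_right _ _, ?_⟩
  refine (measure_mono fun x hx => ?_).trans_lt hn
  refine ⟨hx.1, ?_⟩
  have := hx.2
  simp only [mem_ofPred_eq, not_le] at this
  exact (this.trans_le (min_le_left _ _)).le

lemma select_all {N : ℕ} {ι : Type} [Countable ι] (Y : Set (Fin N → ℂ)) (hY : IsCompact Y)
    (x₀ : Fin N → ℂ)
    (g : ι → (Fin N → ℂ) → ℝ) (hg : ∀ i, Continuous (g i)) (h0 : ∀ i, g i x₀ ≠ 0)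
    (hZ : ∀ i, volume {x | g i x = 0} = 0) (ε : ℝ) (hε : 0 < ε) :
    ∃ δ : ι → ℝ, (∀ i, 0 < δ i) ∧ (∀ i, δ i ≤ |g i x₀|) ∧
      volume (Y \ {x | ∀ i, δ i ≤ |g i x|}) < ENNReal.ofReal ε := by
  obtain ⟨η, hη, hs⟩ := ENNReal.exists_pos_sum_of_countable'
    (ENNReal.ofReal_pos.2 hε).ne' ι
  choose δ h1 h2 h3 using fun i => select_one Y hY x₀ (g i) (hg i) (h0 i) (hZ i) (η i) (hη i)
  refine ⟨δ, h1, h2, ?_⟩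
  have : Y \ {x | ∀ i, δ i ≤ |g i x|} = ⋃ i, (Y \ {x | δ i ≤ |g i x|}) := by
    ext x; simp
  rw [this]
  exact (measure_iUnion_le _).trans_lt ((ENNReal.tsum_le_tsum fun i => (h3 i).le).trans_lt hs)

lemma eval_line {N : ℕ} (x₀ v : Fin N → ℂ) (t : ℂ) (p : MvPolynomial (Fin N) ℂ) :
    Polynomial.eval t (aeval (fun i => Polynomial.C (x₀ i) + Polynomial.C (v i) * Polynomial.X) p) =
      eval (x₀ + t • v) p := by
  induction p using MvPolynomial.induction_on with
  | C a => simp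
  | add p q hp hq => simp [hp, hq]
  | mul_X p i hp => simp [hp, mul_comm (v i) t]

lemma null_poly {N : ℕ} (x₀ : Fin N → ℂ) (p : MvPolynomial (Fin N) ℂ) (h : eval x₀ p ≠ 0) :
    volume {x | ‖eval x p‖ = 0} = 0 := by
  apply null_of_lines x₀
  · exact isClosed_eq (MvPolynomial.continuous_eval p).norm continuous_const
  · intro v
    let P : Polynomial ℂ := aeval (fun i => Polynomial.C (x₀ i) + Polynomial.C (v i) * Polynomial.X) p
    have hP : ∀ t : ℂ, P.eval t = eval (x₀ + t • v) p := fun t => eval_line x₀ v t p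
    have hP0 : P ≠ 0 := by
      intro h'
      apply h
      have := hP 0
      rw [h'] at this
      simpa using this.symm
    have hf : (P.roots.toFinset : Set ℂ).Finite := Finset.finite_toSet _
    refine ((hf.preimage (f := ((↑) : ℝ → ℂ)) Complex.ofReal_injective.injOn).subset ?_).countable
    intro t ht
    have ht' : eval (x₀ + (t : ℂ) • v) p = 0 := by simpa using ht
    have : P.IsRoot (t : ℂ) := by rw [Polynomial.IsRoot.def, hP, ht']
    simpa [hP0] using this

lemma null_re {N : ℕ} (x₀ : Fin N → ℂ) (α : ℂ) (k : Fin N) (d : ℂ)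
    (h : (eval x₀ (C α * X k - C d : MvPolynomial (Fin N) ℂ)).re ≠ 0) :
    volume {x : Fin N → ℂ | (eval x (C α * X k - C d : MvPolynomial (Fin N) ℂ)).re = 0} = 0 := by
  apply null_of_lines x₀
  · exact isClosed_eq (Complex.continuous_re.comp (MvPolynomial.continuous_eval _)) continuous_const
  · intro v
    refine Set.Subsingleton.countable ?_
    intro s hs t ht
    simp at h hs ht
    have key : (s - t) * (α.re * (v k).re - α.im * (v k).im) = 0 := by linear_combination hs - ht
    rcases mul_eq_zero.1 key with h1 | h1
    · linarith
    · exfalso; apply h; linear_combination hs - s * h1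

lemma alg_bound (P Q : ℂ) (s : ℝ) (hs : s ≤ 1 / 2) (hP : P ≠ 0) (h : ‖Q‖ ≤ s * ‖P‖) :
    ‖Q / (P + Q)‖ ≤ 2 * s := by
  have h1 : ‖P‖ - ‖Q‖ ≤ ‖P + Q‖ := norm_sub_le_norm_add P Q
  have h2 : 0 < ‖P‖ := norm_pos_iff.2 hP
  have h0 : 0 ≤ s := by
    by_contra hc
    push Not at hc
    have := norm_nonneg Q
    nlinarith
  have h3 : ‖P‖ / 2 ≤ ‖P + Q‖ := by nlinarith
  rw [norm_div, div_le_iff₀ (by linarith)]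
  nlinarith

lemma ratio_bound (w : ℂ) (R η : ℝ) (hη : 0 < η) (hR : ‖w‖ ≤ R) (hRη : η < R) (h : η ≤ w.re) (m : ℕ) :
    ‖(w - R) ^ (2 * m)‖ ≤ ((R - η) / (R + η)) ^ m * ‖(w + R) ^ (2 * m)‖ := by
  have key : ‖w - R‖ ^ 2 ≤ (R - η) / (R + η) * ‖w + R‖ ^ 2 := by
    rw [div_mul_eq_mul_div, le_div_iff₀ (by linarith)]
    have hw : ‖w‖ ^ 2 ≤ R ^ 2 := by gcongr
    rw [← Complex.normSq_eq_norm_sq] at *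
    rw [← Complex.normSq_eq_norm_sq]
    simp only [Complex.normSq_apply, Complex.sub_re, Complex.sub_im, Complex.add_re, Complex.add_im,
      Complex.ofReal_re, Complex.ofReal_im] at *
    nlinarith [mul_nonneg (sub_nonneg.2 h) (sq_nonneg R), mul_nonneg hη.le (sub_nonneg.2 hw)]
  rw [pow_mul, pow_mul, norm_pow, norm_pow, norm_pow, norm_pow, ← mul_pow]
  gcongr

lemma spec_line {E : Type*} [TopologicalSpace E] [CompactSpace E] [Nonempty E]
    (A : Subalgebra ℂ C(E, ℂ)) (hA : IsClosed (A : Set C(E, ℂ))) (w : A)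
    (h : ∀ x, ((w : C(E, ℂ)) x).re ≠ 0) (z : ℂ) (hz : z ∈ spectrum ℂ w) : z.re ≠ 0 := by
  have : CompleteSpace A := hA.completeSpace_coe
  intro hz0
  let T : Set ℝ := {t | (t : ℂ) * Complex.I ∈ spectrum ℂ w}
  have hc : Continuous fun t : ℝ => (t : ℂ) * Complex.I := by fun_prop
  have hcl : IsClosed T := (spectrum.isClosed (𝕜 := ℂ) w).preimage hc
  have hop : IsOpen T := by
    have e : T = (fun t : ℝ => (t : ℂ) * Complex.I) ⁻¹' interior (spectrum ℂ w) := by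
      ext t
      refine ⟨fun ht => ?_, fun ht => interior_subset (s := spectrum ℂ w) ht⟩
      by_contra hn
      have hf : (t : ℂ) * Complex.I ∈ frontier (spectrum ℂ w) := ⟨subset_closure ht, hn⟩
      have := Subalgebra.frontier_spectrum A w hf
      rw [ContinuousMap.spectrum_eq_range] at this
      obtain ⟨x, hx⟩ := this
      apply h x
      rw [hx]; simp
    rw [e]
    exact isOpen_interior.preimage hc
  have hne : T.Nonempty := ⟨z.im, by
    have : (z.im : ℂ) * Complex.I = z := by apply Complex.ext <;> simp [hz0]
    simpa [T, this] using hz⟩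
  have hu := IsClopen.eq_univ ⟨hcl, hop⟩ hne
  have : (‖w‖ * ‖(1 : A)‖ + 1) ∈ T := by rw [hu]; trivial
  have := spectrum.norm_le_norm_mul_of_mem this
  rw [norm_mul, Complex.norm_I, mul_one, Complex.norm_real, Real.norm_eq_abs] at this
  linarith [le_abs_self (‖w‖ * ‖(1 : A)‖ + 1)]

lemma step_mem {E : Type*} [TopologicalSpace E] [CompactSpace E] [Nonempty E]
    (A : Subalgebra ℂ C(E, ℂ)) (hA : IsClosed (A : Set C(E, ℂ))) (w : A) (η : ℝ) (hη : 0 < η)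
    (h : ∀ x, η ≤ |((w : C(E, ℂ)) x).re|) :
    ∃ F ∈ A, ∀ x, F x = if 0 < ((w : C(E, ℂ)) x).re then 1 else 0 := by
  have : CompleteSpace A := hA.completeSpace_coe
  have h0 : ∀ x, ((w : C(E, ℂ)) x).re ≠ 0 := fun x hx => by
    have := h x
    rw [hx, abs_zero] at this
    linarith
  let F : C(E, ℂ) := ⟨fun x => (((1 + ((w : C(E, ℂ)) x).re / |((w : C(E, ℂ)) x).re|) / 2 : ℝ) : ℂ), by
    have h1 : Continuous fun x => ((w : C(E, ℂ)) x).re := by fun_prop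
    have h2 : Continuous fun x => ((w : C(E, ℂ)) x).re / |((w : C(E, ℂ)) x).re| :=
      h1.div h1.abs (fun x => abs_ne_zero.2 (h0 x))
    fun_prop⟩
  have hF : ∀ x, F x = if 0 < ((w : C(E, ℂ)) x).re then 1 else 0 := by
    intro x
    change (((1 + ((w : C(E, ℂ)) x).re / |((w : C(E, ℂ)) x).re|) / 2 : ℝ) : ℂ) = _
    split_ifs with hx
    · rw [abs_of_pos hx, div_self hx.ne']; norm_num
    · rw [abs_of_neg (lt_of_le_of_ne (not_lt.1 hx) (h0 x)), div_neg, div_self (h0 x)]; norm_num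
  refine ⟨F, ?_, hF⟩
  rw [← SetLike.mem_coe, ← hA.closure_eq, Metric.mem_closure_iff]
  intro ε hε
  let R : ℝ := ‖(w : C(E, ℂ))‖ + η + 1
  have hwR : ∀ x, ‖(w : C(E, ℂ)) x‖ ≤ R := fun x => by
    have := (w : C(E, ℂ)).norm_coe_le_norm x
    simp only [R]; linarith
  have hRη : η < R := by have := norm_nonneg (w : C(E, ℂ)); simp only [R]; linarith
  have hr1 : (R - η) / (R + η) < 1 := by rw [div_lt_one (by linarith)]; linarith
  have hr0 : 0 ≤ (R - η) / (R + η) := div_nonneg (by linarith) (by linarith)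
  obtain ⟨m, hm⟩ := exists_pow_lt_of_lt_one (show 0 < min (1 / 2) (ε / 4) by positivity) hr1
  set s := ((R - η) / (R + η)) ^ m with hs
  have hs1 : s ≤ 1 / 2 := (hm.trans_le (min_le_left _ _)).le
  have hs2 : s ≤ ε / 4 := (hm.trans_le (min_le_right _ _)).le
  let q : Polynomial ℂ := (Polynomial.X + Polynomial.C (R : ℂ)) ^ (2 * m) +
    (Polynomial.X - Polynomial.C (R : ℂ)) ^ (2 * m)
  have hu : IsUnit (Polynomial.aeval w q) := by
    rw [← spectrum.zero_notMem_iff ℂ, spectrum.map_polynomial_aeval]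
    rintro ⟨z, hz, hq⟩
    apply spec_line A hA w h0 z hz
    simp only [q, Polynomial.eval_add, Polynomial.eval_pow, Polynomial.eval_sub, Polynomial.eval_X,
      Polynomial.eval_C] at hq
    have hq' := congrArg norm (eq_neg_of_add_eq_zero_left hq)
    rw [norm_neg, norm_pow, norm_pow] at hq'
    rcases Nat.eq_zero_or_pos m with rfl | hmpos
    · norm_num at hq
    · have h3 : ‖z + R‖ = ‖z - R‖ := (pow_left_inj₀ (norm_nonneg _) (norm_nonneg _) (by omega)).1 hq'
      have h4 : ‖z + R‖ ^ 2 = ‖z - R‖ ^ 2 := by rw [h3]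
      rw [← Complex.normSq_eq_norm_sq, ← Complex.normSq_eq_norm_sq] at h4
      simp only [Complex.normSq_apply, Complex.sub_re, Complex.sub_im, Complex.add_re,
        Complex.add_im, Complex.ofReal_re, Complex.ofReal_im] at h4
      have : R * z.re = 0 := by linarith
      rcases mul_eq_zero.1 this with h5 | h5
      · linarith
      · exact h5
  obtain ⟨u, hu'⟩ := hu
  let f : A := (w + algebraMap ℂ A (R : ℂ)) ^ (2 * m) * (↑u⁻¹ : A)
  have hfx : ∀ x, (f : C(E, ℂ)) x = ((w : C(E, ℂ)) x + R) ^ (2 * m) /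
      (((w : C(E, ℂ)) x + R) ^ (2 * m) + ((w : C(E, ℂ)) x - R) ^ (2 * m)) := by
    intro x
    have h1 : (Polynomial.aeval w q) * (↑u⁻¹ : A) = 1 := by rw [← hu']; simp
    have h2 := congrArg (fun g : A => (g : C(E, ℂ)) x) h1
    simp [q] at h2
    have h3 : (((w : C(E, ℂ)) x + R) ^ (2 * m) + ((w : C(E, ℂ)) x - R) ^ (2 * m)) ≠ 0 := by
      intro h4
      rw [h4] at h2
      simp at h2
    rw [eq_div_iff h3]
    simp [f]
    linear_combination (((w : C(E, ℂ)) x + R) ^ (2 * m)) * h2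
  refine ⟨f, f.2, ?_⟩
  refine lt_of_le_of_lt ((ContinuousMap.dist_le (show 0 ≤ ε / 2 by positivity)).2 fun x => ?_) (by linarith)
  rw [hF, hfx, dist_comm, dist_eq_norm]
  have hx := h x
  split_ifs with hp
  · rw [abs_of_pos hp] at hx
    have hb := ratio_bound _ R η hη (hwR x) hRη hx m
    have hP : ((w : C(E, ℂ)) x + R) ^ (2 * m) ≠ 0 := by
      apply pow_ne_zero
      intro h'
      have := congrArg Complex.re h'
      simp at this; linarith
    have h5 := alg_bound _ _ s hs1 hP hb
    have hne : (((w : C(E, ℂ)) x + R) ^ (2 * m) + ((w : C(E, ℂ)) x - R) ^ (2 * m)) ≠ 0 := by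
      intro h'
      have h6 := norm_sub_le_norm_add (((w : C(E, ℂ)) x + R) ^ (2 * m)) (((w : C(E, ℂ)) x - R) ^ (2 * m))
      rw [h', norm_zero] at h6
      have := norm_pos_iff.2 hP
      nlinarith
    rw [div_sub_one hne, ← norm_neg, ← neg_div]
    refine le_trans (le_of_eq ?_) (h5.trans (by linarith))
    congr 2; ring
  · have hn := lt_of_le_of_ne (not_lt.1 hp) (h0 x)
    rw [abs_of_neg hn] at hx
    have hb := ratio_bound (-(w : C(E, ℂ)) x) R η hη (by simpa using hwR x) hRη (by simpa using hx) m
    have e1 : (-(w : C(E, ℂ)) x - R) ^ (2 * m) = ((w : C(E, ℂ)) x + R) ^ (2 * m) := by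
      rw [← neg_add', Even.neg_pow (even_two_mul m)]
    have e2 : (-(w : C(E, ℂ)) x + R) ^ (2 * m) = ((w : C(E, ℂ)) x - R) ^ (2 * m) := by
      rw [← Even.neg_pow (even_two_mul m)]; ring_nf
    rw [e1, e2] at hb
    have hP : ((w : C(E, ℂ)) x - R) ^ (2 * m) ≠ 0 := by
      apply pow_ne_zero
      intro h'
      have := congrArg Complex.re h'
      simp at this; linarith
    have h5 := alg_bound _ _ s hs1 hP hb
    rw [sub_zero, add_comm (_ ^ _) (_ ^ _)]
    exact h5.trans (by linarith)

lemma dense_alg {E : Type*} [TopologicalSpace E] [CompactSpace E] [Nonempty E]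
    (A : Subalgebra ℂ C(E, ℂ)) (hA : IsClosed (A : Set C(E, ℂ)))
    (h : ∀ x y : E, x ≠ y → ∃ w ∈ A, ∃ η > 0, (∀ z, η ≤ |(w z).re|) ∧
      ((w x).re < 0 ∧ 0 < (w y).re)) : A = ⊤ := by
  let S : StarSubalgebra ℂ C(E, ℂ) :=
    { (A ⊓ star A : Subalgebra ℂ C(E, ℂ)) with
      star_mem' := by
        intro a ha
        change star a ∈ A ⊓ star A
        have ha' : a ∈ A ⊓ star A := ha
        rw [Algebra.mem_inf, Subalgebra.mem_star_iff] at *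
        exact ⟨ha'.2, by simpa using ha'.1⟩ }
  have hS : ∀ f, f ∈ S ↔ f ∈ A ∧ star f ∈ A := fun f => Iff.rfl
  have hsep : S.SeparatesPoints := by
    intro x y hxy
    obtain ⟨w, hw, η, hη, h1, h2, h3⟩ := h x y hxy
    obtain ⟨F, hFA, hF⟩ := step_mem A hA ⟨w, hw⟩ η hη h1
    refine ⟨F, ⟨F, ?_, rfl⟩, ?_⟩
    · change F ∈ S
      rw [hS]
      refine ⟨hFA, ?_⟩
      have : star F = F := by
        ext z
        rw [ContinuousMap.star_apply, hF]
        split_ifs <;> simp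
      rwa [this]
    · rw [hF, hF]
      simp [h3, not_lt.2 h2.le]
  have := ContinuousMap.starSubalgebra_topologicalClosure_eq_top_of_separatesPoints S hsep
  rw [eq_top_iff]
  intro f _
  have hf : f ∈ S.topologicalClosure := by rw [this]; trivial
  have hf' : f ∈ closure (S : Set C(E, ℂ)) := hf
  exact closure_minimal (fun g hg => ((hS g).1 hg).1) hA hf'

/-- A compact set whose points are separated by real parts of polynomials bounded away from the
imaginary axis is polynomially convex. -/
lemma polyConvex_of_sep {N : ℕ} (E : Set (Fin N → ℂ)) (hE : IsCompact E) (hne : E.Nonempty)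
    (h : ∀ x ∈ E, ∀ y ∈ E, x ≠ y → ∃ q : MvPolynomial (Fin N) ℂ, ∃ η > 0,
      (∀ z ∈ E, η ≤ |(eval z q).re|) ∧ (eval x q).re < 0 ∧ 0 < (eval y q).re) :
    IsPolynomiallyConvex E := by
  have : CompactSpace E := isCompact_iff_compactSpace.1 hE
  have : Nonempty E := hne.to_subtype
  have hbdd : ∀ p : MvPolynomial (Fin N) ℂ, ∃ B : ℝ, 0 ≤ B ∧ ∀ x ∈ E, ‖eval x p‖ ≤ B := by
    intro p
    obtain ⟨B, hB⟩ := hE.exists_bound_of_continuousOn (MvPolynomial.continuous_eval p).continuousOn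
    exact ⟨B, (norm_nonneg _).trans (hB _ hne.some_mem), hB⟩
  let φ : MvPolynomial (Fin N) ℂ →ₐ[ℂ] C(E, ℂ) :=
    aeval (fun i => (⟨fun x => x.1 i, (continuous_apply i).comp continuous_subtype_val⟩ : C(E, ℂ)))
  have hφ : ∀ p x, φ p x = eval x.1 p := by
    intro p x
    induction p using MvPolynomial.induction_on with
    | C a => simp [φ]
    | add p q hp hq => simp [hp, hq]
    | mul_X p i hp => rw [map_mul, ContinuousMap.mul_apply, hp]; simp [φ]
  have hdense : φ.range.topologicalClosure = ⊤ := by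
    apply dense_alg _ (Subalgebra.isClosed_topologicalClosure _)
    intro x y hxy
    obtain ⟨q, η, hη, h1, h2, h3⟩ := h x x.2 y y.2 (fun e => hxy (Subtype.ext e))
    refine ⟨φ q, Subalgebra.le_topologicalClosure _ ⟨q, rfl⟩, η, hη, fun z => ?_, ?_, ?_⟩
    · rw [hφ]; exact h1 z z.2
    · rw [hφ]; exact h2
    · rw [hφ]; exact h3
  have happ : ∀ f : C(E, ℂ), ∀ δ > 0, ∃ p : MvPolynomial (Fin N) ℂ, ∀ x : E,
      ‖f x - eval x.1 p‖ < δ := by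
    intro f δ hδ
    have hf : f ∈ closure (φ.range : Set C(E, ℂ)) := by
      have : f ∈ φ.range.topologicalClosure := by rw [hdense]; trivial
      exact this
    obtain ⟨g, ⟨p, rfl⟩, hg⟩ := Metric.mem_closure_iff.1 hf δ hδ
    refine ⟨p, fun x => ?_⟩
    rw [← hφ, ← dist_eq_norm]
    exact (ContinuousMap.dist_apply_le_dist x).trans_lt hg
  apply Subset.antisymm
  · intro z hz
    by_contra hzE
    let g : E → ℝ := fun x => ∑ k, ‖x.1 k - z k‖ ^ 2
    have hg0 : ∀ x, g x ≠ 0 := by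
      intro x hx
      apply hzE
      have : x.1 = z := by
        funext k
        have := (Finset.sum_eq_zero_iff_of_nonneg (fun i _ => by positivity)).1 hx k (Finset.mem_univ k)
        simpa [sub_eq_zero] using this
      rw [← this]; exact x.2
    have hcc : ∀ k, Continuous fun x : E => x.1 k - z k := fun k =>
      ((continuous_apply k).comp continuous_subtype_val).sub continuous_const
    have hgc : Continuous g := continuous_finsetSum _ fun k _ => (hcc k).norm.pow 2
    let f : Fin N → C(E, ℂ) := fun k =>
      ⟨fun x => (starRingEnd ℂ) (x.1 k - z k) / (g x : ℂ), by
        refine Continuous.div (Complex.continuous_conj.comp (hcc k))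
          (Complex.continuous_ofReal.comp hgc) (fun x => ?_)
        exact_mod_cast hg0 x⟩
    have hf1 : ∀ x : E, ∑ k, f k x * (x.1 k - z k) = 1 := by
      intro x
      have h1 : ∀ k, f k x * (x.1 k - z k) = ((‖x.1 k - z k‖ ^ 2 : ℝ) : ℂ) / (g x : ℂ) := by
        intro k
        change (starRingEnd ℂ) (x.1 k - z k) / (g x : ℂ) * (x.1 k - z k) = _
        rw [div_mul_eq_mul_div, mul_comm, Complex.mul_conj, Complex.normSq_eq_norm_sq]
      rw [Finset.sum_congr rfl (fun k _ => h1 k), ← Finset.sum_div, ← Complex.ofReal_sum]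
      exact div_self (by exact_mod_cast hg0 x)
    choose B hB0 hB using fun k => hbdd (X k - C (z k))
    let M : ℝ := ∑ k, B k
    have hM : 0 ≤ M := Finset.sum_nonneg fun k _ => hB0 k
    have hδ : 0 < 1 / (2 * (M + 1)) := by positivity
    choose p hp using fun k => happ (f k) _ hδ
    let Q : MvPolynomial (Fin N) ℂ := 1 - ∑ k, p k * (X k - C (z k))
    have hQz : eval z Q = 1 := by simp [Q]
    have hQE : ∀ x ∈ E, ‖eval x Q‖ ≤ 1 / 2 := by
      intro x hx
      have e : eval x Q = ∑ k, (f k ⟨x, hx⟩ - eval x (p k)) * (x k - z k) := by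
        simp only [sub_mul, Finset.sum_sub_distrib]
        rw [hf1 ⟨x, hx⟩]
        simp [Q]
      rw [e]
      calc _ ≤ ∑ k, ‖(f k ⟨x, hx⟩ - eval x (p k)) * (x k - z k)‖ := norm_sum_le _ _
        _ ≤ ∑ k, 1 / (2 * (M + 1)) * B k := by
          refine Finset.sum_le_sum fun k _ => ?_
          rw [norm_mul]
          have := hB k x hx
          simp only [map_sub, eval_X, eval_C] at this
          exact mul_le_mul (hp k ⟨x, hx⟩).le this (norm_nonneg _) hδ.le
        _ = M / (2 * (M + 1)) := by rw [← Finset.mul_sum]; ring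
        _ ≤ 1 / 2 := by rw [div_le_div_iff₀ (by positivity) (by norm_num)]; linarith
    have h1 := hz Q
    rw [hQz, norm_one] at h1
    have h2 : (⨆ x ∈ E, ‖eval x Q‖) ≤ 1 / 2 :=
      Real.iSup_le (fun x => Real.iSup_le (fun hx => hQE x hx) (by norm_num)) (by norm_num)
    linarith
  · intro z hz p
    obtain ⟨B, hB0, hB⟩ := hbdd p
    refine le_ciSup_of_le ⟨B, ?_⟩ z ?_
    · rintro _ ⟨x, rfl⟩
      exact Real.iSup_le (fun hx => hB x hx) hB0
    · simp [hz]

lemma totDisc_of_sep {N : ℕ} (E : Set (Fin N → ℂ))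
    (h : ∀ x ∈ E, ∀ y ∈ E, x ≠ y → ∃ q : MvPolynomial (Fin N) ℂ, ∃ η > 0,
      (∀ z ∈ E, η ≤ |(eval z q).re|) ∧ (eval x q).re < 0 ∧ 0 < (eval y q).re) :
    IsTotallyDisconnected E := by
  intro t ht hpc x hx y hy
  by_contra hxy
  obtain ⟨q, η, hη, h1, h2, h3⟩ := h x (ht hx) y (ht hy) hxy
  have hc : ContinuousOn (fun z : Fin N → ℂ => (eval z q).re) t :=
    (Complex.continuous_re.comp (MvPolynomial.continuous_eval q)).continuousOn
  obtain ⟨z, hz, hz0⟩ := hpc.intermediate_value hx hy hc ⟨h2.le, h3.le⟩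
  have := h1 z (ht hz)
  simp only at hz0
  rw [hz0, abs_zero] at this
  linarith

/-- Inside any compact `Y ⊆ ℂ^N` containing `x₀`, given countably many polynomials
nonvanishing at `x₀`, there is a totally disconnected compact polynomially convex set
`E ∋ x₀` of almost full measure in `Y` on which all the polynomials are zero-free. -/
theorem stmt_12 (N : ℕ) (Y : Set (Fin N → ℂ)) (hY : IsCompact Y)
    (x₀ : Fin N → ℂ) (hx₀ : x₀ ∈ Y) (ε : ℝ) (hε : 0 < ε)
    (p : ℕ → MvPolynomial (Fin N) ℂ) (hp : ∀ j, eval x₀ (p j) ≠ 0) :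
    ∃ E : Set (Fin N → ℂ), IsTotallyDisconnected E ∧ IsCompact E ∧
      IsPolynomiallyConvex E ∧ x₀ ∈ E ∧ E ⊆ Y ∧
      (∀ j, ∀ x ∈ E, eval x (p j) ≠ 0) ∧
      volume (Y \ E) < ENNReal.ofReal ε := by
  let q : Fin N × Bool × ℚ → MvPolynomial (Fin N) ℂ := fun i =>
    C (if i.2.1 then 1 else -Complex.I) * X i.1 - C ((i.2.2 : ℝ) : ℂ)
  let g : ℕ ⊕ {i // (eval x₀ (q i)).re ≠ 0} → (Fin N → ℂ) → ℝ :=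
    Sum.elim (fun j x => ‖eval x (p j)‖) (fun i x => (eval x (q i.1)).re)
  have hg : ∀ i, Continuous (g i) := by
    rintro (j | i)
    · exact (MvPolynomial.continuous_eval (p j)).norm
    · exact Complex.continuous_re.comp (MvPolynomial.continuous_eval (q i.1))
  have hg0 : ∀ i, g i x₀ ≠ 0 := by
    rintro (j | i)
    · exact norm_ne_zero_iff.2 (hp j)
    · exact i.2
  have hZ : ∀ i, volume {x | g i x = 0} = 0 := by
    rintro (j | i)
    · exact null_poly x₀ (p j) (hp j)
    · exact null_re x₀ _ _ _ i.2
  obtain ⟨δ, hδ, hδ0, hvol⟩ := select_all Y hY x₀ g hg hg0 hZ ε hε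
  set E : Set (Fin N → ℂ) := Y ∩ {x | ∀ i, δ i ≤ |g i x|} with hEdef
  have hEc : IsCompact E := by
    refine hY.inter_right ?_
    have : {x | ∀ i, δ i ≤ |g i x|} = ⋂ i, {x | δ i ≤ |g i x|} := by ext; simp
    rw [this]
    exact isClosed_iInter fun i => isClosed_le continuous_const (hg i).abs
  have hx₀E : x₀ ∈ E := ⟨hx₀, hδ0⟩
  have hsep1 : ∀ (k : Fin N) (b : Bool) (x y : Fin N → ℂ), x ∈ E → y ∈ E →
      ((if b then 1 else -Complex.I) * x k).re < ((if b then 1 else -Complex.I) * y k).re →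
      ∃ d : ℚ, ((if b then 1 else -Complex.I) * x k).re < d ∧
        (d : ℝ) < ((if b then 1 else -Complex.I) * y k).re ∧
        (eval x₀ (q (k, b, d))).re ≠ 0 := by
    intro k b x y hx hy hlt
    obtain ⟨d, hd1, hd2⟩ := exists_rat_btwn hlt
    obtain ⟨d', hd1', hd2'⟩ := exists_rat_btwn hd2
    by_cases h0 : (eval x₀ (q (k, b, d))).re = 0
    · refine ⟨d', hd1.trans hd1', hd2', ?_⟩
      intro h0'
      simp only [q, map_sub, map_mul, eval_C, eval_X, Complex.sub_re, Complex.ofReal_re] at h0 h0'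
      linarith
    · exact ⟨d, hd1, hd2, h0⟩
  have hsep2 : ∀ (k : Fin N) (b : Bool) (x y : Fin N → ℂ), x ∈ E → y ∈ E →
      ((if b then 1 else -Complex.I) * x k).re ≠ ((if b then 1 else -Complex.I) * y k).re →
      ∃ Q : MvPolynomial (Fin N) ℂ, ∃ η > 0,
      (∀ z ∈ E, η ≤ |(eval z Q).re|) ∧ (eval x Q).re < 0 ∧ 0 < (eval y Q).re := by
    intro k b x y hx hy hne
    rcases lt_or_gt_of_ne hne with hlt | hlt
    · obtain ⟨d, h1, h2, h3⟩ := hsep1 k b x y hx hy hlt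
      refine ⟨q (k, b, d), δ (Sum.inr ⟨_, h3⟩), hδ _, fun z hz => hz.2 (Sum.inr ⟨_, h3⟩), ?_, ?_⟩
      · simp only [q, map_sub, map_mul, eval_C, eval_X, Complex.sub_re, Complex.ofReal_re]
        linarith
      · simp only [q, map_sub, map_mul, eval_C, eval_X, Complex.sub_re, Complex.ofReal_re]
        linarith
    · obtain ⟨d, h1, h2, h3⟩ := hsep1 k b y x hy hx hlt
      refine ⟨-q (k, b, d), δ (Sum.inr ⟨_, h3⟩), hδ _, fun z hz => ?_, ?_, ?_⟩
      · rw [map_neg, Complex.neg_re, abs_neg]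
        exact hz.2 (Sum.inr ⟨_, h3⟩)
      · simp only [q, map_neg, map_sub, map_mul, eval_C, eval_X, Complex.neg_re, Complex.sub_re,
          Complex.ofReal_re]
        linarith
      · simp only [q, map_neg, map_sub, map_mul, eval_C, eval_X, Complex.neg_re, Complex.sub_re,
          Complex.ofReal_re]
        linarith
  have hsep : ∀ x ∈ E, ∀ y ∈ E, x ≠ y → ∃ Q : MvPolynomial (Fin N) ℂ, ∃ η > 0,
      (∀ z ∈ E, η ≤ |(eval z Q).re|) ∧ (eval x Q).re < 0 ∧ 0 < (eval y Q).re := by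
    intro x hx y hy hxy
    obtain ⟨k, hk⟩ := Function.ne_iff.1 hxy
    by_cases hre : (x k).re = (y k).re
    · have him : (x k).im ≠ (y k).im := fun him => hk (Complex.ext hre him)
      exact hsep2 k false x y hx hy (by simpa using him)
    · exact hsep2 k true x y hx hy (by simpa using hre)
  refine ⟨E, totDisc_of_sep E hsep, hEc, polyConvex_of_sep E hEc ⟨x₀, hx₀E⟩ hsep, hx₀E,
    inter_subset_left, ?_, ?_⟩
  · intro j x hx h0
    have h1 := hx.2 (Sum.inl j)
    have h2 := hδ (Sum.inl j)
    simp only [g, Sum.elim_inl, h0, norm_zero, abs_zero] at h1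
    linarith
  · rwa [hEdef, sdiff_self_inter]

end
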